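/- Let A be a commutative ring, let γ, δ, s, t ∈ A with γ² − 4δ a unit in A, let q(X,Y) = X² + γXY + δY², let R = A[X,Y]/(q(X,Y) − q(s,t)), and let u, v be the images of X, Y in R. Let Q(R) be the total quotient ring of R with canonical map ι : R → Q(R), let ε = ι(u + s + γt)·ι(v − t)⁻¹ ∈ Q(R), and let J = (u − s, v − t) be the ideal of R generated by u − s and v − t, regarded as an R-module. Then every R-module homomorphism h : J → R is given by multiplication by an element of ι(R) + ι(R)·ε; that is, there exist r, a ∈ R such that for every j ∈ J one has ι(h(j)) = (ι(r) + ι(a)·ε)·ι(j). In other words, the dual module Hom_R(J, R) is isomorphic to the fractional ideal generated by 1 and ε. -/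

import Mathlib

set_option synthInstance.maxHeartbeats 1000000
set_option maxHeartbeats 2000000

noncomputable section
open MvPolynomial

/-- `q(X,Y) - q(s,t)` in `A[X,Y]`, where `q(X,Y) = X² + γXY + δY²`. -/
def keyRel (A : Type*) [CommRing A] (γ δ s t : A) : MvPolynomial (Fin 2) A :=
  X 0 ^ 2 + C γ * X 0 * X 1 + C δ * X 1 ^ 2 - C (s ^ 2 + γ * s * t + δ * t ^ 2)

/-- `R = A[X,Y]/(q(X,Y) - q(s,t))`. -/
abbrev KeyRing (A : Type*) [CommRing A] (γ δ s t : A) :=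
  MvPolynomial (Fin 2) A ⧸ Ideal.span {keyRel A γ δ s t}

/-- The quotient map `A[X,Y] → R`. -/
def kmk (A : Type*) [CommRing A] (γ δ s t : A) :
    MvPolynomial (Fin 2) A →+* KeyRing A γ δ s t :=
  Ideal.Quotient.mk (Ideal.span {keyRel A γ δ s t})

/-- The canonical map `ι : R → Q(R)` into the total quotient ring (the localization of
`R` at its non-zero-divisors). -/
def keyι (A : Type*) [CommRing A] (γ δ s t : A) :
    KeyRing A γ δ s t →+* FractionRing (KeyRing A γ δ s t) :=
  algebraMap _ _

/-- `ε = ι(u + s + γt)·ι(v - t)⁻¹ ∈ Q(R)` (`ι(v - t)` is a unit in `Q(R)` since `v - t`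
is a non-zero-divisor of `R`, so `Ring.inverse` computes its genuine inverse). -/
def keyEps (A : Type*) [CommRing A] (γ δ s t : A) : FractionRing (KeyRing A γ δ s t) :=
  keyι A γ δ s t (kmk A γ δ s t (X 0 + C s + C (γ * t)))
    * Ring.inverse (keyι A γ δ s t (kmk A γ δ s t (X 1 - C t)))

/-!
In a commutative ring, linearity gives `j * h y = y * h j` for a homomorphism `h` from an ideal to
the ring and elements `y`, `j` of that ideal, so `h` is multiplication by `h y / y` whenever `y` is
a non-zero-divisor. For `y = v - t` it remains to see which values `h y` can take: since
`(u - s) * h y` is divisible by `y`, they lie in the colon ideal `(y : u - s)`.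

Now `q(X,Y) - q(s,t) = (X - s) * c + (Y - t) * d` with `c = X + s + γt`, and both `X - s` and `c`
are non-zero-divisors modulo `Y - t`. Hence `v - t` is a non-zero-divisor in `R` and the colon ideal
is `(v - t, u + s + γt)`; dividing by `v - t` turns its two generators into `1` and `ε`.
-/

open scoped nonZeroDivisors

section Quotient

variable {P : Type*} [CommRing P] {x y c d f : P}

theorem mk_mem_nonZeroDivisors_iff :
    Ideal.Quotient.mk (Ideal.span {y}) x ∈ (P ⧸ Ideal.span {y})⁰ ↔ ∀ k, y ∣ x * k → y ∣ k := by
  simp [mem_nonZeroDivisors_iff_left, Ideal.Quotient.mk_surjective.forall, ← map_mul,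
    Ideal.Quotient.eq_zero_iff_dvd]

theorem mk_mem_nonZeroDivisors_swap (hy : y ∈ P⁰)
    (hx : Ideal.Quotient.mk (Ideal.span {y}) x ∈ (P ⧸ Ideal.span {y})⁰) :
    Ideal.Quotient.mk (Ideal.span {x}) y ∈ (P ⧸ Ideal.span {x})⁰ := by
  rw [mk_mem_nonZeroDivisors_iff] at hx ⊢
  rintro k ⟨l, hl⟩
  obtain ⟨l, rfl⟩ := hx l ⟨k, hl.symm⟩
  exact ⟨l, (mul_cancel_left_mem_nonZeroDivisors hy).mp (by linear_combination hl)⟩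

theorem mk_mem_nonZeroDivisors_of_eq_mul_add_mul (hf : f = x * c + y * d) (hy : y ∈ P⁰)
    (hx : Ideal.Quotient.mk (Ideal.span {y}) x ∈ (P ⧸ Ideal.span {y})⁰)
    (hc : Ideal.Quotient.mk (Ideal.span {y}) c ∈ (P ⧸ Ideal.span {y})⁰) :
    Ideal.Quotient.mk (Ideal.span {f}) y ∈ (P ⧸ Ideal.span {f})⁰ := by
  have hfxc : Ideal.Quotient.mk (Ideal.span {y}) f = Ideal.Quotient.mk (Ideal.span {y}) (x * c) :=
    Ideal.Quotient.eq.mpr (Ideal.mem_span_singleton.mpr ⟨d, by rw [hf, add_sub_cancel_left]⟩)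
  refine mk_mem_nonZeroDivisors_swap hy ?_
  rw [hfxc, map_mul]
  exact mul_mem hx hc

theorem mem_span_pair_of_mk_dvd_mk_mul (hf : f = x * c + y * d)
    (hx : Ideal.Quotient.mk (Ideal.span {y}) x ∈ (P ⧸ Ideal.span {y})⁰) {m : P ⧸ Ideal.span {f}}
    (hm : Ideal.Quotient.mk (Ideal.span {f}) y ∣ Ideal.Quotient.mk (Ideal.span {f}) x * m) :
    m ∈ Ideal.span
      {Ideal.Quotient.mk (Ideal.span {f}) y, Ideal.Quotient.mk (Ideal.span {f}) c} := by
  obtain ⟨p, hp⟩ := hm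
  obtain ⟨m, rfl⟩ := Ideal.Quotient.mk_surjective m
  obtain ⟨p, rfl⟩ := Ideal.Quotient.mk_surjective p
  obtain ⟨k, hk⟩ : f ∣ x * m - y * p := by
    rw [← map_mul, ← map_mul] at hp
    exact Ideal.mem_span_singleton.mp (Ideal.Quotient.eq.mp hp)
  obtain ⟨l, hl⟩ : y ∣ m - k * c := mk_mem_nonZeroDivisors_iff.mp hx _
    ⟨p + k * d, by linear_combination hk + k * hf⟩
  refine Ideal.mem_span_pair.mpr ⟨Ideal.Quotient.mk _ l, Ideal.Quotient.mk _ k, ?_⟩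
  rw [← map_mul, ← map_mul, ← map_add]
  exact congrArg _ (by linear_combination -hl)

end Quotient

section DualOfIdeal

variable {R : Type*} [CommRing R] {I : Ideal R}

theorem mul_linearMap_apply_comm (h : I →ₗ[R] R) (i j : I) : (i : R) * h j = j * h i := by
  rw [← smul_eq_mul, ← smul_eq_mul, ← map_smul, ← map_smul]
  exact congrArg h (Subtype.ext (mul_comm (i : R) j))

theorem algebraMap_linearMap_apply_eq_mul {K : Type*} [CommRing K] [Algebra R K]
    (h : I →ₗ[R] R) {y : I} (hy : IsUnit (algebraMap R K y)) {z : K}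
    (hz : algebraMap R K (h y) = z * algebraMap R K y) (j : I) :
    algebraMap R K (h j) = z * algebraMap R K j := by
  apply hy.mul_left_cancel
  calc algebraMap R K y * algebraMap R K (h j)
      = algebraMap R K j * algebraMap R K (h y) := by
        rw [← map_mul, mul_linearMap_apply_comm, map_mul]
    _ = algebraMap R K y * (z * algebraMap R K j) := by rw [hz]; ring

end DualOfIdeal

section Polynomial

variable {σ A : Type*} [CommRing A]

theorem X_sub_C_mem_nonZeroDivisors (i : σ) (a : A) : X i - C a ∈ (MvPolynomial σ A)⁰ := by
  let translate (b : A) : MvPolynomial σ A →ₐ[A] MvPolynomial σ A := bind₁ fun j ↦ X j + C b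
  have hcomp : (translate (-a)).comp (translate a) = AlgHom.id A _ := by
    ext1 j
    simp [translate]
  have hinj : Function.Injective (translate a) :=
    Function.LeftInverse.injective (g := translate (-a)) (DFunLike.congr_fun hcomp)
  refine mem_nonZeroDivisors_of_injective hinj ?_
  simpa [translate] using isRegular_X.mem_nonZeroDivisors

theorem X_sub_C_dvd_sub_bind₁_update [DecidableEq σ] (i : σ) (a : A) (p : MvPolynomial σ A) :
    X i - C a ∣ p - bind₁ (Function.update X i (C a)) p := by
  let π := Ideal.Quotient.mkₐ A (Ideal.span {(X i - C a : MvPolynomial σ A)})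
  have hπ : π = π.comp (bind₁ (Function.update X i (C a))) := by
    ext j
    obtain rfl | hij := eq_or_ne j i
    · simpa [π] using Ideal.Quotient.eq.mpr (Ideal.mem_span_singleton_self _)
    · simp [hij]
  exact Ideal.mem_span_singleton.mp (Ideal.Quotient.eq.mp (DFunLike.congr_fun hπ p))

theorem mk_X_sub_C_mem_nonZeroDivisors {i j : σ} (hij : i ≠ j) (a b : A) :
    Ideal.Quotient.mk (Ideal.span {X j - C b}) (X i - C a) ∈
      (MvPolynomial σ A ⧸ Ideal.span {(X j - C b : MvPolynomial σ A)})⁰ := by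
  classical
  refine mk_mem_nonZeroDivisors_iff.mpr fun k ⟨l, hl⟩ ↦ ?_
  have hmul : (X i - C a) * bind₁ (Function.update X j (C b)) k = 0 := by
    simpa [hij] using congrArg (bind₁ (Function.update X j (C b))) hl
  have hk : bind₁ (Function.update X j (C b)) k = 0 :=
    mem_nonZeroDivisors_iff_left.mp (X_sub_C_mem_nonZeroDivisors i a) _ hmul
  simpa [hk] using X_sub_C_dvd_sub_bind₁_update j b k

end Polynomial

section KeyRing

variable {A : Type*} [CommRing A] (γ δ s t : A)

theorem keyRel_eq_mul_add_mul :
    keyRel A γ δ s t = (X 0 - C s) * (X 0 + C s + C (γ * t)) +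
      (X 1 - C t) * (C γ * X 0 + C δ * (X 1 + C t)) := by
  simp only [keyRel, map_add, map_mul, map_pow]
  ring

theorem kmk_X_sub_C_mem_nonZeroDivisors :
    kmk A γ δ s t (X 1 - C t) ∈ (KeyRing A γ δ s t)⁰ := by
  have hc : (X 0 + C s + C (γ * t) : MvPolynomial (Fin 2) A) = X 0 - C (-(s + γ * t)) := by
    simp only [map_neg, map_add]
    ring
  refine mk_mem_nonZeroDivisors_of_eq_mul_add_mul (keyRel_eq_mul_add_mul γ δ s t)
    (X_sub_C_mem_nonZeroDivisors 1 t) (mk_X_sub_C_mem_nonZeroDivisors zero_ne_one s t) ?_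
  rw [hc]
  exact mk_X_sub_C_mem_nonZeroDivisors zero_ne_one _ t

theorem isUnit_keyι_kmk_X_sub_C : IsUnit (keyι A γ δ s t (kmk A γ δ s t (X 1 - C t))) :=
  IsLocalization.map_units (FractionRing (KeyRing A γ δ s t))
    ⟨_, kmk_X_sub_C_mem_nonZeroDivisors γ δ s t⟩

theorem keyEps_mul_keyι_kmk_X_sub_C :
    keyEps A γ δ s t * keyι A γ δ s t (kmk A γ δ s t (X 1 - C t)) =
      keyι A γ δ s t (kmk A γ δ s t (X 0 + C s + C (γ * t))) :=
  Ring.inverse_mul_cancel_right _ _ (isUnit_keyι_kmk_X_sub_C γ δ s t)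

theorem mem_span_pair_of_kmk_dvd_kmk_mul {m : KeyRing A γ δ s t}
    (hm : kmk A γ δ s t (X 1 - C t) ∣ kmk A γ δ s t (X 0 - C s) * m) :
    m ∈ Ideal.span
      {kmk A γ δ s t (X 1 - C t), kmk A γ δ s t (X 0 + C s + C (γ * t))} :=
  mem_span_pair_of_mk_dvd_mk_mul (keyRel_eq_mul_add_mul γ δ s t)
    (mk_X_sub_C_mem_nonZeroDivisors zero_ne_one s t) hm

end KeyRing

theorem stmt14_general {A : Type*} [CommRing A] (γ δ s t : A)
    (h : (Ideal.span {kmk A γ δ s t (X 0 - C s), kmk A γ δ s t (X 1 - C t)} :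
        Ideal (KeyRing A γ δ s t)) →ₗ[KeyRing A γ δ s t] KeyRing A γ δ s t) :
    ∃ r a : KeyRing A γ δ s t,
      ∀ j : (Ideal.span {kmk A γ δ s t (X 0 - C s), kmk A γ δ s t (X 1 - C t)} :
          Ideal (KeyRing A γ δ s t)),
        keyι A γ δ s t (h j)
          = (keyι A γ δ s t r + keyι A γ δ s t a * keyEps A γ δ s t)
            * keyι A γ δ s t (j : KeyRing A γ δ s t) := by
  let J : Ideal (KeyRing A γ δ s t) :=
    Ideal.span {kmk A γ δ s t (X 0 - C s), kmk A γ δ s t (X 1 - C t)}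
  let x : J := ⟨kmk A γ δ s t (X 0 - C s), Ideal.mem_span_pair.mpr ⟨1, 0, by ring⟩⟩
  let y : J := ⟨kmk A γ δ s t (X 1 - C t), Ideal.mem_span_pair.mpr ⟨0, 1, by ring⟩⟩
  obtain ⟨r, a, hra⟩ := Ideal.mem_span_pair.mp <|
    mem_span_pair_of_kmk_dvd_kmk_mul γ δ s t ⟨h x, mul_linearMap_apply_comm h x y⟩
  refine ⟨r, a, algebraMap_linearMap_apply_eq_mul h (y := y) (isUnit_keyι_kmk_X_sub_C γ δ s t) ?_⟩
  change keyι A γ δ s t (h y) = _ * keyι A γ δ s t (kmk A γ δ s t (X 1 - C t))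
  rw [← hra, map_add, map_mul, map_mul, ← keyEps_mul_keyι_kmk_X_sub_C]
  ring

/-- If `γ² - 4δ` is a unit, every `R`-module homomorphism `h : J → R` from the ideal
`J = (u - s, v - t)` is given by multiplication by an element of `ι(R) + ι(R)·ε`:
there are `r, a ∈ R` with `ι(h(j)) = (ι(r) + ι(a)·ε)·ι(j)` for all `j ∈ J`; i.e.
`Hom_R(J, R)` is isomorphic to the fractional ideal generated by `1` and `ε`. -/
theorem stmt14 {A : Type*} [CommRing A] (γ δ s t : A)
    (hdisc : IsUnit (γ ^ 2 - 4 * δ))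
    (h : (Ideal.span {kmk A γ δ s t (X 0 - C s), kmk A γ δ s t (X 1 - C t)} :
        Ideal (KeyRing A γ δ s t)) →ₗ[KeyRing A γ δ s t] KeyRing A γ δ s t) :
    ∃ r a : KeyRing A γ δ s t,
      ∀ j : (Ideal.span {kmk A γ δ s t (X 0 - C s), kmk A γ δ s t (X 1 - C t)} :
          Ideal (KeyRing A γ δ s t)),
        keyι A γ δ s t (h j)
          = (keyι A γ δ s t r + keyι A γ δ s t a * keyEps A γ δ s t)
            * keyι A γ δ s t (j : KeyRing A γ δ s t) :=
  stmt14_general γ δ s t h
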